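/- Let 𝒦₁, 𝒦₂ be simplicial complexes over S with 𝒦₁ ≠ 𝒦₂, and let sd(𝒦ᵢ) denote their barycentric subdivisions, which are simplicial complexes whose vertex set is contained in the collection of faces of 𝒦ᵢ. Then d(sd(𝒦₁), sd(𝒦₂)) = 1. -/

import Mathlib

open scoped BigOperators

/-- A simplicial complex over the vertex set `S`: a nonempty collection of
nonempty finite subsets of `S`, closed under taking nonempty subsets. -/
def IsSimplicialComplex {S : Type*} (K : Set (Finset S)) : Prop :=
  K.Nonempty ∧ (∀ F ∈ K, F.Nonempty) ∧
    ∀ F ∈ K, ∀ G : Finset S, G.Nonempty → G ⊆ F → G ∈ K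

/-- Halved ℓ¹ distance between finitely supported real functions:
`d(α,β) = (1/2) ∑ₛ |α s - β s|`. -/
noncomputable def l1dist {S : Type*} (α β : S →₀ ℝ) : ℝ :=
  (1 / 2) * (α - β).sum fun _ x => |x|

/-- The ℓ¹ geometric realization of a collection `K` of finite subsets of `S`:
finitely supported probability vectors whose support is a face of `K`. -/
def realization {S : Type*} (K : Set (Finset S)) : Set (S →₀ ℝ) :=
  {α | (∀ s, 0 ≤ α s) ∧ (α.sum fun _ x => x) = 1 ∧ α.support ∈ K}

/-- Distance from a point to a set of finitely supported functions. -/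
noncomputable def distToSet {S : Type*} (α : S →₀ ℝ) (X : Set (S →₀ ℝ)) : ℝ :=
  sInf (l1dist α '' X)

/-- One-sided Hausdorff distance between (the realizations of) two complexes. -/
noncomputable def hdelta {S : Type*} (K₁ K₂ : Set (Finset S)) : ℝ :=
  sSup ((fun α => distToSet α (realization K₂)) '' realization K₁)

/-- Hausdorff distance between (the realizations of) two simplicial complexes. -/
noncomputable def hdist {S : Type*} (K₁ K₂ : Set (Finset S)) : ℝ :=
  max (hdelta K₁ K₂) (hdelta K₂ K₁)

/-- `d(F, K)`: supremum of distances to `|K|₁` over probability vectors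
supported exactly on `F`. -/
noncomputable def dFace {S : Type*} (F : Finset S) (K : Set (Finset S)) : ℝ :=
  sSup ((fun α => distToSet α (realization K)) ''
    {α : S →₀ ℝ | (∀ s, 0 ≤ α s) ∧ (α.sum fun _ x => x) = 1 ∧ α.support = F})

/-- The `n`-skeleton of a simplicial complex. -/
def skeleton {S : Type*} (n : ℕ) (K : Set (Finset S)) : Set (Finset S) :=
  {F | F ∈ K ∧ F.card ≤ n + 1}

/-- The barycentric subdivision of a simplicial complex `K` over `S`: its
vertices are the faces of `K` and its faces are the nonempty finite chains of
faces of `K`. -/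
def sd {S : Type*} (K : Set (Finset S)) : Set (Finset (Finset S)) :=
  {X | X.Nonempty ∧ (∀ x ∈ X, x ∈ K) ∧ IsChain (· ⊆ ·) (X : Set (Finset S))}

/-
The vertices of `sd K` are the faces of `K`, so a face `F` belonging to only one of the two
complexes is a vertex of only one of the two subdivisions. The `ℓ¹` distance between two probability
vectors is `1` minus their overlap: it never exceeds `1`, and the Dirac vector at `F` is at
distance exactly `1` from the other realization, whose elements all vanish at `F`.
-/

section Realization

variable {S : Type*} {K L : Set (Finset S)} {α β : S →₀ ℝ}

theorem l1dist_nonneg (α β : S →₀ ℝ) : 0 ≤ l1dist α β :=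
  mul_nonneg one_half_pos.le (Finset.sum_nonneg fun _ _ => abs_nonneg _)

theorem l1dist_eq_sum_of_support_subset {s : Finset S} (hα : α.support ⊆ s)
    (hβ : β.support ⊆ s) : l1dist α β = 1 / 2 * ∑ v ∈ s, |α v - β v| := by
  classical
  have hs : (α - β).support ⊆ s := Finsupp.support_sub.trans (Finset.union_subset hα hβ)
  rw [l1dist, Finsupp.sum_of_support_subset _ hs _ fun _ _ => abs_zero]
  simp only [Finsupp.sub_apply]

theorem sum_eq_one_of_mem_realization (hα : α ∈ realization K) {s : Finset S}
    (hs : α.support ⊆ s) : ∑ v ∈ s, α v = 1 :=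
  (Finsupp.sum_of_support_subset α hs (fun _ x => x) fun _ _ => rfl).symm.trans hα.2.1

theorem l1dist_eq_one_sub_sum_min (hα : α ∈ realization K) (hβ : β ∈ realization L) :
    l1dist α β = 1 - ∑ v ∈ α.support, min (α v) (β v) := by
  classical
  have hαs : α.support ⊆ α.support ∪ β.support := Finset.subset_union_left
  have hβs : β.support ⊆ α.support ∪ β.support := Finset.subset_union_right
  have abs_sub_eq (v : S) : |α v - β v| = α v + β v - 2 * min (α v) (β v) := by
    linarith [max_sub_min_eq_abs' (α v) (β v), min_add_max (α v) (β v)]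
  have min_eq_zero : ∀ v ∈ α.support ∪ β.support, v ∉ α.support → min (α v) (β v) = 0 := by
    intro v _ hv
    rw [Finsupp.notMem_support_iff.1 hv, min_eq_left (hβ.1 v)]
  rw [Finset.sum_subset hαs min_eq_zero, l1dist_eq_sum_of_support_subset hαs hβs]
  simp only [abs_sub_eq, Finset.sum_sub_distrib, Finset.sum_add_distrib, ← Finset.mul_sum,
    sum_eq_one_of_mem_realization hα hαs, sum_eq_one_of_mem_realization hβ hβs]
  ring

theorem l1dist_le_one (hα : α ∈ realization K) (hβ : β ∈ realization L) : l1dist α β ≤ 1 := by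
  rw [l1dist_eq_one_sub_sum_min hα hβ]
  exact sub_le_self _ (Finset.sum_nonneg fun v _ => le_min (hα.1 v) (hβ.1 v))

theorem l1dist_eq_one_of_disjoint (hα : α ∈ realization K) (hβ : β ∈ realization L)
    (h : Disjoint α.support β.support) : l1dist α β = 1 := by
  rw [l1dist_eq_one_sub_sum_min hα hβ, sub_eq_self]
  refine Finset.sum_eq_zero fun v hv => ?_
  rw [Finsupp.notMem_support_iff.1 (Finset.disjoint_left.1 h hv), min_eq_right (hα.1 v)]

theorem single_one_mem_realization {v : S} (hv : {v} ∈ K) :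
    Finsupp.single v 1 ∈ realization K :=
  ⟨fun _ => Finsupp.single_nonneg.2 zero_le_one _, Finsupp.sum_single_index rfl,
    by rwa [Finsupp.support_single v one_ne_zero]⟩

theorem distToSet_le_one (hα : α ∈ realization K) : distToSet α (realization L) ≤ 1 := by
  obtain hL | ⟨β, hβ⟩ := (realization L).eq_empty_or_nonempty
  · rw [distToSet, hL, Set.image_empty, Real.sInf_empty]
    exact zero_le_one
  · have hbdd : BddBelow (l1dist α '' realization L) :=
      ⟨0, Set.forall_mem_image.2 fun γ _ => l1dist_nonneg α γ⟩
    exact (csInf_le hbdd (Set.mem_image_of_mem _ hβ)).trans (l1dist_le_one hα hβ)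

theorem distToSet_eq_one_of_disjoint (hα : α ∈ realization K) (hL : (realization L).Nonempty)
    (h : ∀ G ∈ L, Disjoint α.support G) : distToSet α (realization L) = 1 := by
  have hdist : ∀ β ∈ realization L, l1dist α β = 1 := fun β hβ =>
    l1dist_eq_one_of_disjoint hα hβ (h _ hβ.2.2)
  rw [distToSet, Set.image_congr hdist, hL.image_const, csInf_singleton]

theorem hdelta_le_one (K L : Set (Finset S)) : hdelta K L ≤ 1 :=
  Real.sSup_le (Set.forall_mem_image.2 fun _ hα => distToSet_le_one hα) zero_le_one

theorem hdelta_eq_one_of_disjoint (hα : α ∈ realization K) (hL : (realization L).Nonempty)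
    (h : ∀ G ∈ L, Disjoint α.support G) : hdelta K L = 1 :=
  IsGreatest.csSup_eq ⟨⟨α, hα, distToSet_eq_one_of_disjoint hα hL h⟩,
    Set.forall_mem_image.2 fun _ hγ => distToSet_le_one hγ⟩

theorem hdist_comm (K L : Set (Finset S)) : hdist K L = hdist L K :=
  max_comm _ _

theorem hdist_eq_one_of_singleton_mem {v : S} (hv : {v} ∈ K) (hvL : ∀ G ∈ L, v ∉ G)
    (hL : (realization L).Nonempty) : hdist K L = 1 := by
  have hdisj : ∀ G ∈ L, Disjoint (Finsupp.single v (1 : ℝ)).support G := fun G hG => by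
    rw [Finsupp.support_single v one_ne_zero]
    exact Finset.disjoint_singleton_left.2 (hvL G hG)
  have hKL : hdelta K L = 1 := hdelta_eq_one_of_disjoint (single_one_mem_realization hv) hL hdisj
  rw [hdist, hKL, max_eq_left (hdelta_le_one L K)]

end Realization

section Subdivision

variable {S : Type*} {K L : Set (Finset S)} {F : Finset S}

theorem singleton_mem_sd (hF : F ∈ K) : {F} ∈ sd K :=
  ⟨Finset.singleton_nonempty F, by simpa using hF, by simp⟩

theorem realization_sd_nonempty (hK : K.Nonempty) : (realization (sd K)).Nonempty :=
  let ⟨_, hF⟩ := hK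
  ⟨_, single_one_mem_realization (singleton_mem_sd hF)⟩

theorem hdist_sd_eq_one_of_mem_of_notMem (hL : L.Nonempty) (hFK : F ∈ K) (hFL : F ∉ L) :
    hdist (sd K) (sd L) = 1 :=
  hdist_eq_one_of_singleton_mem (singleton_mem_sd hFK) (fun _ hX hFX => hFL (hX.2.1 F hFX))
    (realization_sd_nonempty hL)

end Subdivision

theorem stmt19_general {S : Type*} {K₁ K₂ : Set (Finset S)} (h1 : K₁.Nonempty)
    (h2 : K₂.Nonempty) (hne : K₁ ≠ K₂) : hdist (sd K₁) (sd K₂) = 1 := by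
  obtain ⟨F, ⟨hF₁, hF₂⟩ | ⟨hF₂, hF₁⟩⟩ := Set.symmDiff_nonempty.2 hne
  · exact hdist_sd_eq_one_of_mem_of_notMem h2 hF₁ hF₂
  · rw [hdist_comm]
    exact hdist_sd_eq_one_of_mem_of_notMem h1 hF₂ hF₁

/-- Barycentric subdivisions of distinct simplicial complexes are at Hausdorff
distance `1`. -/
theorem stmt19 {S : Type*} (K₁ K₂ : Set (Finset S))
    (h1 : IsSimplicialComplex K₁) (h2 : IsSimplicialComplex K₂)
    (hne : K₁ ≠ K₂) :
    hdist (sd K₁) (sd K₂) = 1 :=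
  stmt19_general h1.1 h2.1 hne
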